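/- Let K₁ and K₂ be compact Hausdorff spaces such that for some ordinal α and some n ∈ ℕ with n ≥ 1, the α-th Cantor–Bendixson derivative K₁^(α) has exactly n elements and K₂^(α) has exactly one element. Then every positive isomorphism T : C(K₁) → C(K₂) satisfies ‖T‖·‖T⁻¹‖ ≥ 2n − 1; that is, d_BM⁺(C(K₁), C(K₂)) ≥ 2n − 1. -/

import Mathlib

open Ordinal Set

/-- The Cantor–Bendixson derivative of order `o`. -/
noncomputable def cbDeriv (X : Type*) [TopologicalSpace X] : Ordinal.{0} → Set X :=
  fun o => Ordinal.limitRecOn o Set.univ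
    (fun _ ih => derivedSet ih)
    (fun o _ ih => ⋂ (β : Ordinal) (h : β < o), ih β h)

/-!
If `K₂^(β)` misses a closed set `W` and `U` is an open set meeting `K₁^(β)`, then for every `ε > 0`
some function peaking inside `U` has image at most `ε` on `W`. This goes by induction on `β`: at a
successor, `W ∩ K₂^(β)` is finite and `U ∩ K₁^(β)` is infinite, and since the images of disjoint
bumps add up to at most `T 1`, averaging gives a bump whose image is small on `W ∩ K₂^(β)`; where
that image is not small, the induction hypothesis applies inside the bump.

The same averaging over `n` points of `K₁^(α)` gives a bump `g` with `n * T g ≤ m * T 1` on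
`K₂^(α)`, where `m` is the number of points of `K₂^(α)`. Let `r = 2n / m - 1` and take `e` peaking
inside `{g = 1}` with `T e` negligible away from `K₂^(α)`. Then `u = 2g - 1 + (r - 1)e` has norm at
least `r`, while `‖T u‖` is almost at most `‖T 1‖`: near `K₂^(α)` because
`T u ≤ (r + 1) T g - T 1`, elsewhere because `T u` is almost `2 T g - T 1`.
-/

open Filter Topology
open scoped Finset NNReal

section CantorBendixson

variable {X : Type*} [TopologicalSpace X]

theorem cbDeriv_zero : cbDeriv X 0 = Set.univ :=
  limitRecOn_zero ..

theorem cbDeriv_add_one (β : Ordinal.{0}) : cbDeriv X (β + 1) = derivedSet (cbDeriv X β) :=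
  limitRecOn_add_one ..

theorem cbDeriv_of_isSuccLimit {β : Ordinal.{0}} (hβ : Order.IsSuccLimit β) :
    cbDeriv X β = ⋂ γ < β, cbDeriv X γ :=
  limitRecOn_limit _ _ _ _ hβ

theorem isClosed_cbDeriv [T1Space X] (β : Ordinal.{0}) : IsClosed (cbDeriv X β) := by
  induction β using Ordinal.limitRecOn with
  | zero => rw [cbDeriv_zero]; exact isClosed_univ
  | add_one β _ => rw [cbDeriv_add_one]; exact isClosed_derivedSet _
  | limit β hβ ih =>
    rw [cbDeriv_of_isSuccLimit hβ]
    exact isClosed_biInter ih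

theorem antitone_cbDeriv [T1Space X] : Antitone (cbDeriv X) := by
  intro γ β hγβ
  induction β using Ordinal.limitRecOn with
  | zero => rw [nonpos_iff_eq_zero.1 hγβ]
  | add_one β ih =>
    rcases hγβ.lt_or_eq with hlt | rfl
    · have hsub : cbDeriv X (β + 1) ⊆ cbDeriv X β := by
        rw [cbDeriv_add_one]
        exact (isClosed_iff_derivedSet_subset _).1 (isClosed_cbDeriv β)
      exact hsub.trans (ih (Order.lt_add_one_iff.1 hlt))
    · rfl
  | limit β hβ _ =>
    rcases hγβ.lt_or_eq with hlt | rfl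
    · rw [cbDeriv_of_isSuccLimit hβ]
      exact biInter_subset_of_mem hlt
    · rfl

theorem exists_disjoint_cbDeriv_of_isSuccLimit [T1Space X] {W : Set X}
    (hW : IsCompact W) {β : Ordinal.{0}} (hβ : Order.IsSuccLimit β)
    (hWβ : Disjoint W (cbDeriv X β)) : ∃ γ < β, Disjoint W (cbDeriv X γ) := by
  have : Nonempty (Iio β) := ⟨⟨0, hβ.bot_lt⟩⟩
  have hempty : W ∩ ⋂ γ : Iio β, cbDeriv X γ = ∅ := by
    rw [← hWβ.inter_eq, cbDeriv_of_isSuccLimit hβ]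
    exact congrArg (W ∩ ·) (biInter_eq_iInter (Iio β) fun γ _ ↦ cbDeriv X γ).symm
  obtain ⟨⟨γ, hγ⟩, hWγ⟩ := hW.elim_directed_family_closed
    (fun γ : Iio β ↦ cbDeriv X γ) (fun _ ↦ isClosed_cbDeriv _) hempty
    (antitone_cbDeriv.comp_monotone (Subtype.mono_coe _)).directed_ge
  exact ⟨γ, hγ, disjoint_iff_inter_eq_empty.2 hWγ⟩

theorem finite_inter_of_disjoint_derivedSet {W A : Set X} (hW : IsCompact W)
    (hWA : Disjoint W (derivedSet A)) : (W ∩ A).Finite := by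
  by_contra hinf
  obtain ⟨x, hxW, hx⟩ := Set.Infinite.exists_accPt_of_subset_isCompact hinf hW inter_subset_left
  exact hWA.notMem_of_mem_left hxW (derivedSet_mono _ _ inter_subset_right hx)

theorem infinite_inter_of_nonempty_inter_derivedSet [T1Space X] {U A : Set X}
    (hU : IsOpen U) (hUA : (U ∩ derivedSet A).Nonempty) : (U ∩ A).Infinite := by
  obtain ⟨x, hxU, hx⟩ := hUA
  exact Set.Infinite.of_accPt (AccPt.nhds_inter hx (hU.mem_nhds hxU))

end CantorBendixson

section Averaging

theorem exists_mem_forall_card_mul_le {ι κ R : Type*} [Semiring R] [LinearOrder R]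
    [IsStrictOrderedRing R] {s : Finset ι} (hs : s.Nonempty) (Z : Finset κ) {a : ι → κ → R}
    (ha : ∀ i ∈ s, ∀ k ∈ Z, 0 ≤ a i k) :
    ∃ i ∈ s, ∀ k ∈ Z, #s * a i k ≤ #Z * ∑ j ∈ s, a j k := by
  classical
  by_contra! hlarge
  obtain ⟨i₀, hi₀⟩ := hs
  obtain ⟨z₀, hz₀, -⟩ := hlarge i₀ hi₀
  have : Nonempty κ := ⟨z₀⟩
  choose! k hkZ hk using hlarge
  obtain ⟨z, hz, hcard⟩ : ∃ z ∈ Z, #s ≤ #Z * #{i ∈ s | k i = z} := by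
    refine Finset.exists_le_of_sum_le ⟨z₀, hz₀⟩ ?_
    rw [Finset.sum_const, Nat.nsmul_eq_mul, ← Finset.mul_sum,
      ← Finset.card_eq_sum_card_fiberwise hkZ]
  have hfiber : {i ∈ s | k i = z}.Nonempty := by
    have hs_pos : 0 < #s := Finset.card_pos.2 ⟨i₀, hi₀⟩
    exact Finset.card_pos.1 (Nat.pos_of_mul_pos_left (hs_pos.trans_le hcard))
  have hsum : 0 ≤ ∑ j ∈ s, a j z := Finset.sum_nonneg fun i hi ↦ ha i hi z hz
  refine lt_irrefl (#s * ∑ j ∈ s, a j z) ?_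
  calc (#s : R) * ∑ j ∈ s, a j z
      ≤ (#{i ∈ s | k i = z} * #Z : ℕ) * ∑ j ∈ s, a j z := by
        rw [mul_comm]
        gcongr
    _ = ∑ i ∈ s with k i = z, #Z * ∑ j ∈ s, a j z := by
        rw [Finset.sum_const, _root_.nsmul_eq_mul, Nat.cast_mul, mul_assoc]
    _ < ∑ i ∈ s with k i = z, #s * a i z := by
        refine Finset.sum_lt_sum_of_nonempty hfiber fun i hi ↦ ?_
        obtain ⟨his, rfl⟩ := Finset.mem_filter.1 hi
        exact hk i his
    _ ≤ #s * ∑ j ∈ s, a j z := by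
        rw [← Finset.mul_sum]
        gcongr
        · exact fun i hi _ ↦ ha i hi z hz
        · exact Finset.filter_subset _ _

end Averaging

section Peaks

variable {X : Type*} [TopologicalSpace X]

/-- The continuous function `e : X → [0, 1]` peaks inside `U`: it takes the value `1` and vanishes
outside `U`. Such functions locate points of `U` without fixing any of them in advance. -/
structure IsPeakedIn (e : C(X, ℝ)) (U : Set X) : Prop where
  nonneg : 0 ≤ e
  le_one : e ≤ 1
  eqOn_compl : EqOn e 0 Uᶜ
  exists_eq_one : ∃ x, e x = 1

namespace IsPeakedIn

variable {e : C(X, ℝ)} {U V : Set X}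

theorem mono (he : IsPeakedIn e U) (hUV : U ⊆ V) : IsPeakedIn e V :=
  { he with eqOn_compl := he.eqOn_compl.mono (compl_subset_compl.2 hUV) }

theorem exists_mem_eq_one (he : IsPeakedIn e U) : ∃ x ∈ U, e x = 1 := by
  obtain ⟨x, hx⟩ := he.exists_eq_one
  refine ⟨x, by_contra fun hxU ↦ ?_, hx⟩
  exact zero_ne_one ((he.eqOn_compl hxU).symm.trans hx)

theorem le_of_eqOn_one (he : IsPeakedIn e U) {g : C(X, ℝ)} (hg : 0 ≤ g) (hgU : EqOn g 1 U) :
    e ≤ g := by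
  intro x
  by_cases hx : x ∈ U
  · exact (he.le_one x).trans_eq (hgU hx).symm
  · exact (he.eqOn_compl hx).trans_le (hg x)

end IsPeakedIn

theorem exists_isPeakedIn_eventuallyEq_one [T4Space X] {U : Set X} {x : X} (hU : U ∈ 𝓝 x) :
    ∃ h : C(X, ℝ), IsPeakedIn h U ∧ h =ᶠ[𝓝 x] 1 := by
  obtain ⟨N, hN, hNclosed, hNU⟩ := exists_mem_nhds_isClosed_subset (interior_mem_nhds.2 hU)
  obtain ⟨h, hzero, hone, hIcc⟩ := exists_continuous_zero_one_of_isClosed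
    isOpen_interior.isClosed_compl hNclosed (disjoint_compl_left_iff_subset.2 hNU)
  exact ⟨h, ⟨fun y ↦ (hIcc y).1, fun y ↦ (hIcc y).2,
    hzero.mono (compl_subset_compl.2 interior_subset), x, hone (mem_of_mem_nhds hN)⟩,
    hone.eventuallyEq_of_mem hN⟩

theorem sum_le_one_of_pairwiseDisjoint {ι : Type*} {t : Finset ι} {U : ι → Set X}
    (hU : (t : Set ι).PairwiseDisjoint U) {h : ι → C(X, ℝ)} (hh : ∀ i ∈ t, IsPeakedIn (h i) (U i)) :
    ∑ i ∈ t, h i ≤ 1 := by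
  intro x
  change (∑ i ∈ t, h i) x ≤ 1
  rw [ContinuousMap.sum_apply]
  by_cases hx : ∃ i ∈ t, x ∈ U i
  · obtain ⟨i, hi, hxi⟩ := hx
    rw [Finset.sum_eq_single_of_mem i hi fun j hj hji ↦
      (hh j hj).eqOn_compl ((hU hi hj hji.symm).notMem_of_mem_left hxi)]
    exact (hh i hi).le_one x
  · push Not at hx
    rw [Finset.sum_eq_zero fun i hi ↦ (hh i hi).eqOn_compl (hx i hi)]
    exact zero_le_one

theorem exists_bumps_sum_le_one [T4Space X] (t : Finset X) :
    ∃ h : X → C(X, ℝ), (∀ x, 0 ≤ h x ∧ h x ≤ 1 ∧ h x =ᶠ[𝓝 x] 1) ∧ ∑ x ∈ t, h x ≤ 1 := by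
  obtain ⟨U, hU, hdisj⟩ := t.finite_toSet.t2_separation
  choose h hpeak hone using fun x ↦
    exists_isPeakedIn_eventuallyEq_one ((hU x).2.mem_nhds (hU x).1)
  exact ⟨h, fun x ↦ ⟨(hpeak x).nonneg, (hpeak x).le_one, hone x⟩,
    sum_le_one_of_pairwiseDisjoint hdisj fun x _ ↦ hpeak x⟩

end Peaks

section PositiveOperators

variable {X Y : Type*} [TopologicalSpace X] [TopologicalSpace Y] {T : C(X, ℝ) →ₗ[ℝ] C(Y, ℝ)}

theorem norm_map_two_smul_sub_one_add_smul_le [CompactSpace Y] (hT : Monotone T)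
    {e g : C(X, ℝ)} (he : 0 ≤ e) (heg : e ≤ g) (hg : g ≤ 1) {r ε : ℝ} (hr : 1 ≤ r) (hε : 0 ≤ ε)
    (hsmall : ∀ z, (r + 1) * T g z ≤ ‖T 1‖ + T 1 z + ε ∨ (r - 1) * T e z ≤ ε) :
    ‖T ((2 : ℝ) • g - 1 + (r - 1) • e)‖ ≤ ‖T 1‖ + ε := by
  rw [ContinuousMap.norm_le _ (by positivity)]
  intro z
  have hTe : 0 ≤ T e z := (monotone_iff_map_nonneg T).1 hT e he z
  have hTeg : T e z ≤ T g z := hT heg z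
  have hTg : T g z ≤ T 1 z := hT hg z
  have hT₁ : T 1 z ≤ ‖T 1‖ := ContinuousMap.apply_le_norm _ z
  have hr₀ : 0 ≤ r - 1 := sub_nonneg.2 hr
  have hTu : T ((2 : ℝ) • g - 1 + (r - 1) • e) z = 2 * T g z - T 1 z + (r - 1) * T e z := by
    simp
  rw [hTu, Real.norm_eq_abs, abs_le]
  constructor
  · have hre : 0 ≤ (r - 1) * T e z := mul_nonneg hr₀ hTe
    linarith
  · rcases hsmall z with hg_small | he_small
    · have hre : (r - 1) * T e z ≤ (r - 1) * T g z := by gcongr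
      linarith
    · linarith

variable [T4Space X]

theorem exists_bump_card_mul_le (hT : Monotone T) {t : Finset X} (ht : t.Nonempty)
    (Z : Finset Y) :
    ∃ x ∈ t, ∃ h : C(X, ℝ), 0 ≤ h ∧ h ≤ 1 ∧ h =ᶠ[𝓝 x] 1 ∧
      ∀ z ∈ Z, #t * T h z ≤ #Z * T 1 z := by
  obtain ⟨h, hh, hsum⟩ := exists_bumps_sum_le_one t
  have hTnonneg : ∀ x z, 0 ≤ T (h x) z := fun x ↦
    (monotone_iff_map_nonneg T).1 hT _ (hh x).1
  obtain ⟨x, hx, hxZ⟩ := exists_mem_forall_card_mul_le ht Z (a := fun x z ↦ T (h x) z)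
    fun x _ z _ ↦ hTnonneg x z
  refine ⟨x, hx, h x, (hh x).1, (hh x).2.1, (hh x).2.2, fun z hz ↦ (hxZ z hz).trans ?_⟩
  gcongr
  rw [← ContinuousMap.sum_apply, ← map_sum]
  exact hT hsum z

theorem exists_bump_lt_of_infinite (hT : Monotone T) {s : Set X} (hs : s.Infinite)
    (Z : Finset Y) {ε : ℝ} (hε : 0 < ε) :
    ∃ x ∈ s, ∃ h : C(X, ℝ), 0 ≤ h ∧ h =ᶠ[𝓝 x] 1 ∧ ∀ z ∈ Z, T h z < ε := by
  obtain ⟨N, hN, hNZ⟩ : ∃ N : ℕ, 0 < N ∧ ∀ z ∈ Z, #Z * T 1 z < N * ε :=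
    ((eventually_gt_atTop 0).and ((eventually_all_finset Z).2 fun z _ ↦
      (tendsto_natCast_atTop_atTop.atTop_mul_const hε).eventually_gt_atTop _)).exists
  obtain ⟨t, hts, rfl⟩ := hs.exists_subset_card_eq N
  obtain ⟨x, hx, h, hnonneg, -, hone, hle⟩ := exists_bump_card_mul_le hT (Finset.card_pos.1 hN) Z
  exact ⟨x, hts hx, h, hnonneg, hone, fun z hz ↦
    lt_of_mul_lt_mul_left ((hle z hz).trans_lt (hNZ z hz)) (Nat.cast_nonneg _)⟩

theorem exists_isPeakedIn_forall_le [CompactSpace Y] [T1Space Y] (hT : Monotone T) {ε : ℝ}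
    (hε : 0 < ε) (β : Ordinal.{0}) {W : Set Y} {U : Set X} (hW : IsClosed W)
    (hWβ : Disjoint W (cbDeriv Y β)) (hU : IsOpen U) (hUβ : (U ∩ cbDeriv X β).Nonempty) :
    ∃ e, IsPeakedIn e U ∧ ∀ z ∈ W, T e z ≤ ε := by
  induction β using Ordinal.limitRecOn generalizing W U with
  | zero =>
    rw [cbDeriv_zero, disjoint_univ] at hWβ
    obtain ⟨x, hxU, -⟩ := hUβ
    obtain ⟨e, he, -⟩ := exists_isPeakedIn_eventuallyEq_one (hU.mem_nhds hxU)
    exact ⟨e, he, by simp [hWβ]⟩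
  | add_one β ih =>
    rw [cbDeriv_add_one] at hWβ hUβ
    have hfin := finite_inter_of_disjoint_derivedSet hW.isCompact hWβ
    obtain ⟨x, ⟨hxU, hxβ⟩, h, hnonneg, hone, hsmall⟩ := exists_bump_lt_of_infinite hT
      (infinite_inter_of_nonempty_inter_derivedSet hU hUβ) hfin.toFinset hε
    obtain ⟨V, hVone, hVopen, hxV⟩ := eventually_nhds_iff.1 hone
    have hdisj : Disjoint (W ∩ {z | ε ≤ T h z}) (cbDeriv Y β) :=
      Set.disjoint_left.2 fun z hz hzβ ↦
        (hsmall z (hfin.mem_toFinset.2 ⟨hz.1, hzβ⟩)).not_ge hz.2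
    obtain ⟨e, he, hle⟩ := ih (hW.inter (isClosed_le continuous_const (T h).continuous)) hdisj
      (hU.inter hVopen) ⟨x, ⟨hxU, hxV⟩, hxβ⟩
    refine ⟨e, he.mono inter_subset_left, fun z hz ↦ ?_⟩
    rcases le_or_gt ε (T h z) with hlarge | hlt
    · exact hle z ⟨hz, hlarge⟩
    · exact (hT ((he.mono inter_subset_right).le_of_eqOn_one hnonneg hVone) z).trans hlt.le
  | limit β hβ ih =>
    obtain ⟨γ, hγ, hWγ⟩ := exists_disjoint_cbDeriv_of_isSuccLimit hW.isCompact hβ hWβ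
    exact ih γ hγ hW hWγ hU (hUβ.mono (inter_subset_inter_right U (antitone_cbDeriv hγ.le)))

end PositiveOperators

section Embeddings

variable {K₁ K₂ : Type*} [TopologicalSpace K₁] [CompactSpace K₁] [T2Space K₁]
  [TopologicalSpace K₂] [CompactSpace K₂] [T1Space K₂] {T : C(K₁, ℝ) →ₗ[ℝ] C(K₂, ℝ)}

theorem exists_le_norm_and_norm_map_le (hT : Monotone T) {α : Ordinal.{0}} {x : K₁}
    (hx : x ∈ cbDeriv K₁ α) {g : C(K₁, ℝ)} (hg₀ : 0 ≤ g) (hg₁ : g ≤ 1) (hgx : g =ᶠ[𝓝 x] 1)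
    {r : ℝ} (hr : 1 ≤ r) (hTg : ∀ z ∈ cbDeriv K₂ α, (r + 1) * T g z ≤ ‖T 1‖ + T 1 z)
    {ε : ℝ} (hε : 0 < ε) : ∃ u : C(K₁, ℝ), r ≤ ‖u‖ ∧ ‖T u‖ ≤ ‖T 1‖ + ε := by
  obtain ⟨V, hVone, hVopen, hxV⟩ := eventually_nhds_iff.1 hgx
  have hr₀ : 0 < r := one_pos.trans_le hr
  let O : Set K₂ := {z | (r + 1) * T g z < ‖T 1‖ + T 1 z + ε}
  have hO : IsOpen O := isOpen_lt (by fun_prop) (by fun_prop)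
  have hdisj : Disjoint Oᶜ (cbDeriv K₂ α) :=
    disjoint_compl_left_iff_subset.2 fun z hz ↦ lt_add_of_le_of_pos (hTg z hz) hε
  obtain ⟨e, he, hTe⟩ := exists_isPeakedIn_forall_le hT (div_pos hε hr₀) α
    hO.isClosed_compl hdisj hVopen ⟨x, hxV, hx⟩
  refine ⟨(2 : ℝ) • g - 1 + (r - 1) • e, ?_, norm_map_two_smul_sub_one_add_smul_le hT he.nonneg
    (he.le_of_eqOn_one hg₀ hVone) hg₁ hr hε.le fun z ↦ ?_⟩
  · obtain ⟨p, hpV, hp⟩ := he.exists_mem_eq_one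
    have hgp : g p = 1 := hVone p hpV
    calc r = ((2 : ℝ) • g - 1 + (r - 1) • e) p := by simp [hgp, hp]; ring
      _ ≤ _ := ContinuousMap.apply_le_norm _ p
  · refine (em (z ∈ O)).imp le_of_lt fun hz ↦ ?_
    calc (r - 1) * T e z ≤ (r - 1) * (ε / r) :=
          mul_le_mul_of_nonneg_left (hTe z hz) (sub_nonneg.2 hr)
      _ ≤ r * (ε / r) := by gcongr; exact sub_le_self r zero_le_one
      _ = ε := mul_div_cancel₀ _ hr₀.ne'

theorem le_norm_map_one_mul_of_card_le (hT : Monotone T) {c : ℝ≥0} (hc : AntilipschitzWith c T)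
    {α : Ordinal.{0}} (hF : (cbDeriv K₂ α).Finite) {t : Finset K₁} (ht : t.Nonempty)
    (htα : ↑t ⊆ cbDeriv K₁ α) {r : ℝ} (hr : 1 ≤ r)
    (hcard : (r + 1) * (cbDeriv K₂ α).ncard ≤ 2 * #t) : r ≤ ‖T 1‖ * c := by
  obtain ⟨x, hx, g, hg₀, hg₁, hgx, hle⟩ := exists_bump_card_mul_le hT ht hF.toFinset
  have hTg : ∀ z ∈ cbDeriv K₂ α, (r + 1) * T g z ≤ ‖T 1‖ + T 1 z := by
    intro z hz
    have hT₁ : 0 ≤ T 1 z := (monotone_iff_map_nonneg T).1 hT 1 zero_le_one z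
    have havg : #t * T g z ≤ (cbDeriv K₂ α).ncard * T 1 z := by
      simpa only [ncard_eq_toFinset_card _ hF] using hle z (hF.mem_toFinset.2 hz)
    have hdouble : (r + 1) * T g z ≤ 2 * T 1 z := by
      refine le_of_mul_le_mul_left ?_ (Nat.cast_pos.2 ht.card_pos : (0 : ℝ) < #t)
      calc #t * ((r + 1) * T g z) = (r + 1) * (#t * T g z) := by ring
        _ ≤ (r + 1) * ((cbDeriv K₂ α).ncard * T 1 z) := by gcongr
        _ = (r + 1) * (cbDeriv K₂ α).ncard * T 1 z := by ring
        _ ≤ 2 * #t * T 1 z := by gcongr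
        _ = #t * (2 * T 1 z) := by ring
    linarith [ContinuousMap.apply_le_norm (T 1) z]
  refine le_mul_of_forall_lt₀ fun a ha b hb ↦ ?_
  obtain ⟨u, hru, hTu⟩ :=
    exists_le_norm_and_norm_map_le hT (htα hx) hg₀ hg₁ hgx hr hTg (sub_pos.2 ha)
  have hTua : ‖T u‖ ≤ a := hTu.trans_eq (add_sub_cancel _ _)
  have hb₀ : 0 ≤ b := c.coe_nonneg.trans hb.le
  calc r ≤ ‖u‖ := hru
    _ ≤ c * ‖T u‖ := ZeroHomClass.bound_of_antilipschitz T hc u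
    _ ≤ b * a := by gcongr
    _ = a * b := mul_comm b a

theorem stmt_13_general {T : C(K₁, ℝ) →L[ℝ] C(K₂, ℝ)} (hT : Monotone T) {c : ℝ≥0}
    (hc : AntilipschitzWith c T) {α : Ordinal.{0}} (hF : (cbDeriv K₂ α).Finite) {t : Finset K₁}
    (htα : ↑t ⊆ cbDeriv K₁ α) : 2 * (#t : ℝ) ≤ (‖T‖ * c + 1) * (cbDeriv K₂ α).ncard := by
  rcases t.eq_empty_or_nonempty with rfl | ht
  · rw [Finset.card_empty, Nat.cast_zero, mul_zero]
    positivity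
  have : Nonempty K₁ := ht.to_type
  have hone : 1 ≤ ‖T 1‖ * c := by
    simpa only [norm_one, mul_comm] using ZeroHomClass.bound_of_antilipschitz T hc 1
  have hnorm : ‖T 1‖ * c ≤ ‖T‖ * c := by
    gcongr
    exact T.unit_le_opNorm 1 norm_one.le
  by_contra! hlt
  obtain ⟨δ, hδ, hδlt⟩ := exists_pos_mul_lt (sub_pos.2 hlt) ((cbDeriv K₂ α).ncard : ℝ)
  have hle : ‖T‖ * c + δ ≤ ‖T 1‖ * c :=
    le_norm_map_one_mul_of_card_le (T := T.toLinearMap) hT hc hF ht htα (by linarith) (by linarith)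
  linarith

end Embeddings

/-- If `K₁`, `K₂` are compact Hausdorff spaces such that for some ordinal `α` and
`n ≥ 1` the derivative `K₁^(α)` has exactly `n` elements and `K₂^(α)` is a singleton,
then every positive isomorphism `T : C(K₁) → C(K₂)` satisfies
`‖T‖·‖T⁻¹‖ ≥ 2n - 1`. -/
theorem stmt_13 {K₁ K₂ : Type*} [TopologicalSpace K₁] [CompactSpace K₁] [T2Space K₁]
    [TopologicalSpace K₂] [CompactSpace K₂] [T2Space K₂]
    (α : Ordinal.{0}) (n : ℕ) (hn : 1 ≤ n)
    (h₁ : (cbDeriv K₁ α).Finite ∧ (cbDeriv K₁ α).ncard = n)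
    (h₂ : ∃ y : K₂, cbDeriv K₂ α = {y}) :
    ∀ T : C(K₁, ℝ) ≃L[ℝ] C(K₂, ℝ), (∀ f : C(K₁, ℝ), 0 ≤ f → 0 ≤ T f) →
      2 * (n : ℝ) - 1 ≤
        ‖(T : C(K₁, ℝ) →L[ℝ] C(K₂, ℝ))‖ * ‖(T.symm : C(K₂, ℝ) →L[ℝ] C(K₁, ℝ))‖ := by
  obtain ⟨hfin, hcard⟩ := h₁
  obtain ⟨y, hy⟩ := h₂
  intro T hT
  have hbound := stmt_13_general (T := (T : C(K₁, ℝ) →L[ℝ] C(K₂, ℝ)))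
    ((monotone_iff_map_nonneg _).2 hT) T.antilipschitz (hy ▸ finite_singleton y)
    hfin.coe_toFinset.subset
  rw [hy, ncard_singleton, ← ncard_eq_toFinset_card _ hfin, hcard, Nat.cast_one, mul_one] at hbound
  exact sub_le_iff_le_add.2 hbound
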